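/- arXiv:2202.07974 — 3 statements merged into one kernel-verified Lean document; each statement's English description precedes it below -/
import Mathlib

section
/- The set 𝒱 is dense in the metric space (C⁰_r(𝕋,S⁰_cl), d^{0,0}): for every v ∈ C⁰_r(𝕋,S⁰_cl) and every ε > 0 there exists w ∈ 𝒱 with d^{0,0}(v,w) < ε. -/
open Real MeasureTheory Filter Topology

noncomputable section

/-- Partial derivative in the first variable `x`. -/
def pdx (f : ℝ × ℝ → ℝ) : ℝ × ℝ → ℝ := fun p => fderiv ℝ f p (1, 0)

/-- Partial derivative in the second variable `ξ`. -/
def pdxi (f : ℝ × ℝ → ℝ) : ℝ × ℝ → ℝ := fun p => fderiv ℝ f p (0, 1)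

/-- Poisson bracket `{f,g} = ∂_ξ f ∂_x g − ∂_x f ∂_ξ g`. -/
def pbr (f g : ℝ × ℝ → ℝ) : ℝ × ℝ → ℝ :=
  fun p => pdxi f p * pdx g p - pdx f p * pdxi g p

/-- Harmonic oscillator symbol `h₀(x,ξ) = (x²+ξ²)/2`. -/
def h0 : ℝ × ℝ → ℝ := fun p => (p.1 ^ 2 + p.2 ^ 2) / 2

/-- The harmonic flow `φᵗ`. -/
def flow (t : ℝ) (p : ℝ × ℝ) : ℝ × ℝ :=
  (p.1 * Real.cos t + p.2 * Real.sin t, -p.1 * Real.sin t + p.2 * Real.cos t)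

/-- Resonant average `⟨v⟩(x,ξ) = (1/2π)∫₀^{2π} v(t,φᵗ(x,ξ)) dt`. -/
def resAvg (v : ℝ → ℝ × ℝ → ℝ) : ℝ × ℝ → ℝ :=
  fun p => (1 / (2 * π)) * ∫ t in (0:ℝ)..(2 * π), v t (flow t p)

/-- Positively homogeneous of degree `0`. -/
def PosHomog0 (f : ℝ × ℝ → ℝ) : Prop :=
  ∀ (lam : ℝ) (p : ℝ × ℝ), 1 ≤ lam → 1 ≤ p.1 ^ 2 + p.2 ^ 2 →
    f (lam * p.1, lam * p.2) = f p

/-- Membership in `C⁰(𝕋, S^ρ)` (real valued): 2π-periodicity and continuity in `t`,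
smoothness in `(x,ξ)`, and uniform symbol bounds of order `ρ`. -/
def InC0S (ρ : ℝ) (v : ℝ → ℝ × ℝ → ℝ) : Prop :=
  (∀ t p, v (t + 2 * π) p = v t p) ∧
  Continuous (fun q : ℝ × (ℝ × ℝ) => v q.1 q.2) ∧
  (∀ t, ContDiff ℝ (⊤ : ℕ∞) (v t)) ∧
  ∀ α β : ℕ, ∃ C > 0, ∀ (t : ℝ) (p : ℝ × ℝ),
    |pdx^[α] (pdxi^[β] (v t)) p| ≤
      C * (1 + p.1 ^ 2 + p.2 ^ 2) ^ (ρ - ((α : ℝ) + β) / 2)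

/-- Membership in `C⁰_r(𝕋, S⁰_cl)`: a real valued family in `C⁰(𝕋,S⁰)` admitting a
principal symbol `v₀(t,·)`, smooth and positively homogeneous of degree 0, with
`v − v₀ ∈ C⁰(𝕋, S^μ)` for some `μ < 0`. -/
def InC0Scl (v : ℝ → ℝ × ℝ → ℝ) : Prop :=
  InC0S 0 v ∧ ∃ (v0 : ℝ → ℝ × ℝ → ℝ) (μ : ℝ), μ < 0 ∧
    (∀ t, ContDiff ℝ (⊤ : ℕ∞) (v0 t)) ∧ (∀ t, PosHomog0 (v0 t)) ∧
    InC0S μ (fun t p => v t p - v0 t p)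

/-- The set `𝒱`: classical symbols whose principal symbol `v₀` fulfills
`{⟨v₀⟩, h₀} ≢ 0` on `x²+ξ² ≥ 1`. -/
def InV (v : ℝ → ℝ × ℝ → ℝ) : Prop :=
  InC0S 0 v ∧ ∃ (v0 : ℝ → ℝ × ℝ → ℝ) (μ : ℝ), μ < 0 ∧
    (∀ t, ContDiff ℝ (⊤ : ℕ∞) (v0 t)) ∧ (∀ t, PosHomog0 (v0 t)) ∧
    InC0S μ (fun t p => v t p - v0 t p) ∧
    ∃ p : ℝ × ℝ, 1 ≤ p.1 ^ 2 + p.2 ^ 2 ∧ pbr (resAvg v0) h0 p ≠ 0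

/-- The seminorm `℘_j^{0,0}`. -/
def sem00 (j : ℕ) (f : ℝ → ℝ × ℝ → ℝ) : ℝ :=
  ∑ α ∈ Finset.range (j + 1), ∑ β ∈ Finset.range (j + 1 - α),
    ⨆ q : ℝ × (ℝ × ℝ),
      |pdx^[α] (pdxi^[β] (f q.1)) q.2| *
        (1 + q.2.1 ^ 2 + q.2.2 ^ 2) ^ (((α : ℝ) + β) / 2)

/-- The distance `d^{0,0}`. -/
def dist00 (f g : ℝ → ℝ × ℝ → ℝ) : ℝ :=
  ∑' j : ℕ, (1 / 2 ^ j) *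
    (sem00 j (fun t p => f t p - g t p) / (1 + sem00 j (fun t p => f t p - g t p)))


/-! ### Linearity of the partial derivatives -/

theorem contDiff_pdx {f : ℝ × ℝ → ℝ} (hf : ContDiff ℝ (⊤ : ℕ∞) f) :
    ContDiff ℝ (⊤ : ℕ∞) (pdx f) :=
  (hf.fderiv_right (m := (⊤ : ℕ∞)) (by simp)).clm_apply contDiff_const

theorem contDiff_pdxi {f : ℝ × ℝ → ℝ} (hf : ContDiff ℝ (⊤ : ℕ∞) f) :
    ContDiff ℝ (⊤ : ℕ∞) (pdxi f) :=
  (hf.fderiv_right (m := (⊤ : ℕ∞)) (by simp)).clm_apply contDiff_const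

theorem contDiff_iterate_pdxi {f : ℝ × ℝ → ℝ} (hf : ContDiff ℝ (⊤ : ℕ∞) f) (n : ℕ) :
    ContDiff ℝ (⊤ : ℕ∞) (pdxi^[n] f) := by
  induction n with
  | zero => exact hf
  | succ n ih => rw [Function.iterate_succ_apply']; exact contDiff_pdxi ih

theorem contDiff_iterate_pdx {f : ℝ × ℝ → ℝ} (hf : ContDiff ℝ (⊤ : ℕ∞) f) (n : ℕ) :
    ContDiff ℝ (⊤ : ℕ∞) (pdx^[n] f) := by
  induction n with
  | zero => exact hf
  | succ n ih => rw [Function.iterate_succ_apply']; exact contDiff_pdx ih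

theorem pdx_add {f g : ℝ × ℝ → ℝ} (hf : Differentiable ℝ f) (hg : Differentiable ℝ g) :
    pdx (fun p => f p + g p) = fun p => pdx f p + pdx g p := by
  funext p
  simp [pdx, fderiv_fun_add (hf p) (hg p)]

theorem pdxi_add {f g : ℝ × ℝ → ℝ} (hf : Differentiable ℝ f) (hg : Differentiable ℝ g) :
    pdxi (fun p => f p + g p) = fun p => pdxi f p + pdxi g p := by
  funext p
  simp [pdxi, fderiv_fun_add (hf p) (hg p)]

theorem pdx_const_mul (c : ℝ) (f : ℝ × ℝ → ℝ) :
    pdx (fun p => c * f p) = fun p => c * pdx f p := by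
  funext p
  have h : fderiv ℝ (fun p => c * f p) p = c • fderiv ℝ f p :=
    congrFun (fderiv_const_smul_field c) p
  simp [pdx, h]

theorem pdxi_const_mul (c : ℝ) (f : ℝ × ℝ → ℝ) :
    pdxi (fun p => c * f p) = fun p => c * pdxi f p := by
  funext p
  have h : fderiv ℝ (fun p => c * f p) p = c • fderiv ℝ f p :=
    congrFun (fderiv_const_smul_field c) p
  simp [pdxi, h]

theorem iterate_pdx_add {f g : ℝ × ℝ → ℝ} (hf : ContDiff ℝ (⊤ : ℕ∞) f)
    (hg : ContDiff ℝ (⊤ : ℕ∞) g) (n : ℕ) :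
    pdx^[n] (fun p => f p + g p) = fun p => pdx^[n] f p + pdx^[n] g p := by
  induction n with
  | zero => rfl
  | succ n ih =>
    simp only [Function.iterate_succ_apply', ih]
    exact pdx_add ((contDiff_iterate_pdx hf n).differentiable (by simp))
      ((contDiff_iterate_pdx hg n).differentiable (by simp))

theorem iterate_pdxi_add {f g : ℝ × ℝ → ℝ} (hf : ContDiff ℝ (⊤ : ℕ∞) f)
    (hg : ContDiff ℝ (⊤ : ℕ∞) g) (n : ℕ) :
    pdxi^[n] (fun p => f p + g p) = fun p => pdxi^[n] f p + pdxi^[n] g p := by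
  induction n with
  | zero => rfl
  | succ n ih =>
    simp only [Function.iterate_succ_apply', ih]
    exact pdxi_add ((contDiff_iterate_pdxi hf n).differentiable (by simp))
      ((contDiff_iterate_pdxi hg n).differentiable (by simp))

theorem iterate_pd_const_mul (c : ℝ) (f : ℝ × ℝ → ℝ) (α β : ℕ) :
    pdx^[α] (pdxi^[β] (fun p => c * f p)) = fun p => c * pdx^[α] (pdxi^[β] f) p := by
  have hβ : pdxi^[β] (fun p => c * f p) = fun p => c * pdxi^[β] f p := by
    induction β with
    | zero => rfl
    | succ n ih => simp only [Function.iterate_succ_apply', ih, pdxi_const_mul]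
  rw [hβ]
  induction α with
  | zero => rfl
  | succ n ih => simp only [Function.iterate_succ_apply', ih, pdx_const_mul]

/-! ### Symbol classes -/

theorem InC0S.add {ρ : ℝ} {v w : ℝ → ℝ × ℝ → ℝ} (hv : InC0S ρ v) (hw : InC0S ρ w) :
    InC0S ρ (fun t p => v t p + w t p) := by
  obtain ⟨hv1, hv2, hv3, hv4⟩ := hv
  obtain ⟨hw1, hw2, hw3, hw4⟩ := hw
  refine ⟨fun t p => by simp only [hv1, hw1], hv2.add hw2,
    fun t => (hv3 t).add (hw3 t), fun α β => ?_⟩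
  obtain ⟨C, hC, hvC⟩ := hv4 α β
  obtain ⟨D, hD, hwD⟩ := hw4 α β
  refine ⟨C + D, by positivity, fun t p => ?_⟩
  rw [iterate_pdxi_add (hv3 t) (hw3 t), iterate_pdx_add (contDiff_iterate_pdxi (hv3 t) β)
    (contDiff_iterate_pdxi (hw3 t) β), add_mul]
  exact (abs_add_le _ _).trans (add_le_add (hvC t p) (hwD t p))

/-- Homogeneity of degree `-k` on the complement of the closed unit disc. -/
def HomogOutside (k : ℕ) (f : ℝ × ℝ → ℝ) : Prop :=
  ∀ (lam : ℝ) (p : ℝ × ℝ), 1 ≤ lam → 1 < p.1 ^ 2 + p.2 ^ 2 → lam ^ k * f (lam • p) = f p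

theorem HomogOutside.fderiv_apply {k : ℕ} {f : ℝ × ℝ → ℝ} (hf : HomogOutside k f) (u : ℝ × ℝ) :
    HomogOutside (k + 1) (fun p => fderiv ℝ f p u) := by
  intro lam p hlam hp
  have hopen : IsOpen {q : ℝ × ℝ | 1 < q.1 ^ 2 + q.2 ^ 2} :=
    isOpen_lt continuous_const (by fun_prop)
  have heq : (fun q => lam ^ k * f (lam • q)) =ᶠ[𝓝 p] f := by
    filter_upwards [hopen.mem_nhds hp] with q hq using hf lam q hlam hq
  have h1 : fderiv ℝ (fun q => lam ^ k * f (lam • q)) p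
      = lam ^ k • fderiv ℝ (fun q => f (lam • q)) p :=
    congrFun (fderiv_const_smul_field (f := fun q => f (lam • q)) (lam ^ k)) p
  have h2 : fderiv ℝ (fun q => f (lam • q)) p = lam • fderiv ℝ f (lam • p) :=
    fderiv_comp_smul lam
  beta_reduce
  rw [← heq.fderiv_eq (𝕜 := ℝ), h1, h2]
  simp [pow_succ, mul_assoc]

theorem HomogOutside.iterate_pd {f : ℝ × ℝ → ℝ} (hf : HomogOutside 0 f) (α β : ℕ) :
    HomogOutside (α + β) (pdx^[α] (pdxi^[β] f)) := by
  have hβ : HomogOutside β (pdxi^[β] f) := by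
    induction β with
    | zero => exact hf
    | succ n ih => rw [Function.iterate_succ_apply']; exact ih.fderiv_apply _
  induction α with
  | zero => simpa using hβ
  | succ n ih =>
    rw [Function.iterate_succ_apply', Nat.succ_add]; exact ih.fderiv_apply _

theorem HomogOutside.bound {k : ℕ} {f : ℝ × ℝ → ℝ} (hf : HomogOutside k f) (hc : Continuous f) :
    ∃ C > 0, ∀ p : ℝ × ℝ, |f p| ≤ C * (1 + p.1 ^ 2 + p.2 ^ 2) ^ (-((k : ℝ) / 2)) := by
  obtain ⟨M, hM⟩ := (isCompact_closedBall (0 : ℝ × ℝ) 2).exists_bound_of_continuousOn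
    hc.continuousOn
  have hM0 : 0 ≤ M := (norm_nonneg _).trans (hM 0 (by simp))
  have hweight : ∀ s : ℝ, 0 ≤ s → (1 + s) ^ (-((k : ℝ) / 2)) = ((√(1 + s)) ^ k)⁻¹ := by
    intro s hs
    rw [rpow_neg (by positivity), Real.sqrt_eq_rpow, ← rpow_mul_natCast (by positivity)]
    ring_nf
  refine ⟨(M + 1) * 3 ^ k, by positivity, fun p => ?_⟩
  rw [add_assoc, hweight _ (by positivity), ← div_eq_mul_inv, le_div_iff₀ (by positivity)]
  have hball : ∀ q : ℝ × ℝ, q.1 ^ 2 + q.2 ^ 2 ≤ 4 → |f q| ≤ M + 1 := by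
    intro q hq
    refine (hM q ?_).trans (by linarith)
    rw [mem_closedBall_zero_iff, Prod.norm_def]
    refine max_le ?_ ?_ <;> rw [Real.norm_eq_abs] <;>
      exact abs_le_of_sq_le_sq (by nlinarith [sq_nonneg q.1, sq_nonneg q.2]) (by norm_num)
  rcases le_or_gt (p.1 ^ 2 + p.2 ^ 2) 4 with hp | hp
  · have : √(1 + (p.1 ^ 2 + p.2 ^ 2)) ≤ 3 := by
      rw [Real.sqrt_le_left (by norm_num)]
      linarith
    gcongr
    exact hball p hp
  · set r := √(p.1 ^ 2 + p.2 ^ 2) with hr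
    have hr2 : r ^ 2 = p.1 ^ 2 + p.2 ^ 2 := Real.sq_sqrt (by positivity)
    have hr0 : 0 ≤ r := Real.sqrt_nonneg _
    have hr1 : 2 < r := by nlinarith
    have hq : ((2 / r) • p).1 ^ 2 + ((2 / r) • p).2 ^ 2 = 4 := by
      simp only [Prod.smul_fst, Prod.smul_snd, smul_eq_mul, mul_pow]
      rw [← mul_add, ← hr2]
      field_simp
      norm_num
    have h := hf (r / 2) ((2 / r) • p) (by linarith) (by rw [hq]; norm_num)
    have hs : (r / 2) • (2 / r) • p = p := by
      rw [smul_smul, show r / 2 * (2 / r) = 1 by field_simp, one_smul]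
    rw [hs] at h
    have hle := hball _ hq.le
    rw [← h, abs_mul, abs_of_nonneg (by positivity)] at hle
    have hsq : √(1 + (p.1 ^ 2 + p.2 ^ 2)) ≤ 3 * (r / 2) := by
      rw [Real.sqrt_le_left (by positivity)]
      nlinarith
    calc |f p| * √(1 + (p.1 ^ 2 + p.2 ^ 2)) ^ k ≤ |f p| * (3 * (r / 2)) ^ k := by gcongr
      _ = ((r / 2) ^ k * |f p|) * 3 ^ k := by rw [mul_pow]; ring
      _ ≤ (M + 1) * 3 ^ k := by gcongr

theorem PosHomog0.homogOutside {f : ℝ × ℝ → ℝ} (hf : PosHomog0 f) : HomogOutside 0 f := by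
  intro lam p hlam hp
  rw [pow_zero, one_mul]
  exact hf lam p hlam hp.le

theorem inC0S_mul_posHomog0 {c : ℝ → ℝ} {f : ℝ × ℝ → ℝ} {K : ℝ} (hc : Continuous c)
    (hper : ∀ t, c (t + 2 * π) = c t) (hK : 0 < K) (hbd : ∀ t, |c t| ≤ K)
    (hf : ContDiff ℝ (⊤ : ℕ∞) f) (hf0 : PosHomog0 f) :
    InC0S 0 (fun t p => c t * f p) := by
  refine ⟨fun t p => by simp only [hper], ?_, fun t => contDiff_const.mul hf, fun α β => ?_⟩
  · have := hf.continuous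
    fun_prop
  · obtain ⟨C, hC, h⟩ := (hf0.homogOutside.iterate_pd α β).bound
      (contDiff_iterate_pdx (contDiff_iterate_pdxi hf β) α).continuous
    refine ⟨K * C, by positivity, fun t p => ?_⟩
    have hp := h p
    rw [iterate_pd_const_mul, abs_mul, mul_assoc, zero_sub]
    push_cast at hp
    exact mul_le_mul (hbd t) hp (abs_nonneg _) hK.le

/-! ### The distance along a line -/

theorem sem00_const_mul (j : ℕ) (c : ℝ) (f : ℝ → ℝ × ℝ → ℝ) :
    sem00 j (fun t p => c * f t p) = |c| * sem00 j f := by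
  simp only [sem00, Finset.mul_sum, iterate_pd_const_mul, abs_mul, mul_assoc,
    Real.mul_iSup_of_nonneg (abs_nonneg c)]

theorem sem00_nonneg (j : ℕ) (f : ℝ → ℝ × ℝ → ℝ) : 0 ≤ sem00 j f :=
  Finset.sum_nonneg fun _ _ => Finset.sum_nonneg fun _ _ => Real.iSup_nonneg fun _ => by positivity

theorem tendsto_dist00_add_const_mul (v g : ℝ → ℝ × ℝ → ℝ) :
    Tendsto (fun δ : ℝ => dist00 v (fun t p => v t p + δ * g t p)) (𝓝 0) (𝓝 0) := by
  have hterm : ∀ δ : ℝ, dist00 v (fun t p => v t p + δ * g t p) =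
      ∑' j : ℕ, (1 / 2 ^ j) * (|δ| * sem00 j g / (1 + |δ| * sem00 j g)) := by
    intro δ
    have hdiff : (fun t p => v t p - (v t p + δ * g t p)) = fun t p => (-δ) * g t p := by
      funext t p; ring
    simp only [dist00, hdiff, sem00_const_mul, abs_neg]
  simp only [hterm]
  have hzero : ∑' _ : ℕ, (0 : ℝ) = 0 := tsum_zero
  rw [← hzero]
  refine tendsto_tsum_of_dominated_convergence (bound := fun j : ℕ => (1 / 2 : ℝ) ^ j)
    summable_geometric_two (fun j => ?_) (Eventually.of_forall fun δ j => ?_)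
  · have hcont : ContinuousAt
        (fun δ : ℝ => (1 / 2 ^ j : ℝ) * (|δ| * sem00 j g / (1 + |δ| * sem00 j g))) 0 := by
      have : (1 + |(0 : ℝ)| * sem00 j g) ≠ 0 := by simp
      fun_prop (disch := assumption)
    simpa [ContinuousAt] using hcont
  · have hs : 0 ≤ |δ| * sem00 j g := mul_nonneg (abs_nonneg _) (sem00_nonneg j g)
    rw [Real.norm_of_nonneg (by positivity), one_div_pow]
    refine mul_le_of_le_one_right (by positivity) ?_
    rw [div_le_one (by positivity)]
    linarith

/-! ### Differentiability of the resonant average -/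

theorem continuous_flow : Continuous fun q : ℝ × (ℝ × ℝ) => flow q.1 q.2 := by
  unfold flow
  fun_prop

/-- The harmonic flow as a continuous linear map. -/
def flowL (t : ℝ) : ℝ × ℝ →L[ℝ] ℝ × ℝ :=
  (Real.cos t • ContinuousLinearMap.fst ℝ ℝ ℝ + Real.sin t • ContinuousLinearMap.snd ℝ ℝ ℝ).prod
    (-Real.sin t • ContinuousLinearMap.fst ℝ ℝ ℝ + Real.cos t • ContinuousLinearMap.snd ℝ ℝ ℝ)

theorem coe_flowL (t : ℝ) : ⇑(flowL t) = flow t := by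
  funext p
  simp [flowL, flow, mul_comm]

theorem norm_flowL_le (t : ℝ) : ‖flowL t‖ ≤ 2 := by
  refine ContinuousLinearMap.opNorm_le_bound _ (by norm_num) fun p => ?_
  have h1 : |p.1| ≤ ‖p‖ := norm_fst_le p
  have h2 : |p.2| ≤ ‖p‖ := norm_snd_le p
  have hmul : ∀ a c : ℝ, |a| ≤ ‖p‖ → |c| ≤ 1 → |a * c| ≤ ‖p‖ := fun a c ha hc => by
    rw [abs_mul]
    exact (mul_le_of_le_one_right (abs_nonneg a) hc).trans ha
  rw [coe_flowL, two_mul]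
  refine max_le ?_ ?_
  · exact (abs_add_le _ _).trans (add_le_add (hmul _ _ h1 (Real.abs_cos_le_one t))
      (hmul _ _ h2 (Real.abs_sin_le_one t)))
  · exact (abs_add_le _ _).trans (add_le_add (hmul _ _ (by rwa [abs_neg]) (Real.abs_sin_le_one t))
      (hmul _ _ h2 (Real.abs_cos_le_one t)))

theorem norm_fderiv_le {f : ℝ × ℝ → ℝ} {p : ℝ × ℝ} {C D : ℝ} (hx : |pdx f p| ≤ C)
    (hxi : |pdxi f p| ≤ D) : ‖fderiv ℝ f p‖ ≤ C + D := by
  have hC : 0 ≤ C := (abs_nonneg _).trans hx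
  have hD : 0 ≤ D := (abs_nonneg _).trans hxi
  refine ContinuousLinearMap.opNorm_le_bound _ (by positivity) fun q => ?_
  have hq : fderiv ℝ f p q = q.1 * pdx f p + q.2 * pdxi f p := by
    have : q = q.1 • ((1, 0) : ℝ × ℝ) + q.2 • ((0, 1) : ℝ × ℝ) := by ext <;> simp
    conv_lhs => rw [this, map_add, map_smul, map_smul]
    rfl
  rw [hq, Real.norm_eq_abs, add_mul, mul_comm C, mul_comm D]
  refine (abs_add_le _ _).trans ?_
  rw [abs_mul, abs_mul]
  exact add_le_add (mul_le_mul (norm_fst_le q) hx (abs_nonneg _) (norm_nonneg _))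
    (mul_le_mul (norm_snd_le q) hxi (abs_nonneg _) (norm_nonneg _))

theorem InC0S.exists_norm_fderiv_le {ρ : ℝ} {v : ℝ → ℝ × ℝ → ℝ} (hρ : ρ ≤ 0) (hv : InC0S ρ v) :
    ∃ C, ∀ t p, ‖fderiv ℝ (v t) p‖ ≤ C := by
  obtain ⟨-, -, -, h⟩ := hv
  obtain ⟨C, hC, hvC⟩ := h 1 0
  obtain ⟨D, hD, hvD⟩ := h 0 1
  have hweight : ∀ (a : ℝ) (p : ℝ × ℝ), a ≤ 0 → (1 + p.1 ^ 2 + p.2 ^ 2) ^ a ≤ 1 := fun a p ha =>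
    Real.rpow_le_one_of_one_le_of_nonpos (by nlinarith [sq_nonneg p.1, sq_nonneg p.2]) ha
  refine ⟨C + D, fun t p => norm_fderiv_le ?_ ?_⟩
  · exact (hvC t p).trans (mul_le_of_le_one_right hC.le (hweight _ p (by norm_num; linarith)))
  · exact (hvD t p).trans (mul_le_of_le_one_right hD.le (hweight _ p (by norm_num; linarith)))

theorem differentiable_resAvg {v : ℝ → ℝ × ℝ → ℝ} {C : ℝ}
    (hc : Continuous fun q : ℝ × (ℝ × ℝ) => v q.1 q.2) (hd : ∀ t, Differentiable ℝ (v t))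
    (hC : ∀ t p, ‖fderiv ℝ (v t) p‖ ≤ C) : Differentiable ℝ (resAvg v) := by
  intro p
  have hcomp : Continuous fun q : ℝ × (ℝ × ℝ) => v q.1 (flow q.1 q.2) :=
    hc.comp (continuous_fst.prodMk continuous_flow)
  have hslice : ∀ q, Continuous fun t => v t (flow t q) := fun q =>
    hcomp.comp (continuous_id.prodMk continuous_const)
  have hderiv : ∀ t q, HasFDerivAt (fun q => v t (flow t q))
      ((fderiv ℝ (v t) (flow t q)).comp (flowL t)) q := fun t q => by
    have h := (flowL t).hasFDerivAt (x := q)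
    rw [coe_flowL] at h
    exact ((hd t) (flow t q)).hasFDerivAt.comp q h
  have hint := intervalIntegral.hasFDerivAt_integral_of_dominated_of_fderiv_le
    (μ := volume) (a := 0) (b := 2 * π) (bound := fun _ => C * 2) (x₀ := p)
    (F := fun q t => v t (flow t q)) (F' := fun q t => fderiv ℝ (fun q => v t (flow t q)) q)
    univ_mem (Eventually.of_forall fun q => (hslice q).aestronglyMeasurable)
    ((hslice p).intervalIntegrable _ _)
    ((measurable_fderiv_with_param ℝ (f := fun t q => v t (flow t q)) hcomp).comp
      (measurable_id.prodMk measurable_const)).aestronglyMeasurable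
    (Eventually.of_forall fun t _ q _ => ?_) intervalIntegrable_const
    (Eventually.of_forall fun t _ q _ => (hderiv t q).differentiableAt.hasFDerivAt)
  · exact hint.differentiableAt.const_mul _
  · rw [(hderiv t q).fderiv]
    refine (ContinuousLinearMap.opNorm_comp_le _ _).trans ?_
    exact mul_le_mul (hC t _) (norm_flowL_le t) (norm_nonneg _) ((norm_nonneg _).trans (hC t 0))

theorem resAvg_add_const_mul {v g : ℝ → ℝ × ℝ → ℝ} (δ : ℝ)
    (hv : Continuous fun q : ℝ × (ℝ × ℝ) => v q.1 q.2)
    (hg : Continuous fun q : ℝ × (ℝ × ℝ) => g q.1 q.2) :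
    resAvg (fun t p => v t p + δ * g t p) = fun p => resAvg v p + δ * resAvg g p := by
  funext p
  have hslice : ∀ {u : ℝ → ℝ × ℝ → ℝ}, Continuous (fun q : ℝ × (ℝ × ℝ) => u q.1 q.2) →
      Continuous fun t => u t (flow t p) := fun hu =>
    hu.comp (continuous_id.prodMk (continuous_flow.comp (continuous_id.prodMk continuous_const)))
  simp only [resAvg]
  rw [intervalIntegral.integral_add ((hslice hv).intervalIntegrable _ _)
    (((hslice hg).const_mul δ).intervalIntegrable _ _), intervalIntegral.integral_const_mul]
  ring

theorem pbr_add_const_mul {f g : ℝ × ℝ → ℝ} (δ : ℝ) (h : ℝ × ℝ → ℝ) (p : ℝ × ℝ)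
    (hf : Differentiable ℝ f) (hg : Differentiable ℝ g) :
    pbr (fun p => f p + δ * g p) h p = pbr f h p + δ * pbr g h p := by
  simp only [pbr, pdx_add hf (hg.const_mul δ), pdxi_add hf (hg.const_mul δ), pdx_const_mul,
    pdxi_const_mul]
  ring

/-! ### The perturbation -/

/-- A smooth function of `s`, positive for `0 ≤ s` and equal to `s` for `1 ≤ s`. -/
def smoothRadiusSq (s : ℝ) : ℝ := 1 + (s - 1) * Real.smoothTransition s

theorem smoothRadiusSq_pos {s : ℝ} (hs : 0 ≤ s) : 0 < smoothRadiusSq s := by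
  unfold smoothRadiusSq
  have h0 := Real.smoothTransition.nonneg s
  rcases lt_or_ge s 1 with h | h
  · nlinarith [Real.smoothTransition.lt_one_of_lt_one h]
  · nlinarith

theorem smoothRadiusSq_of_one_le {s : ℝ} (hs : 1 ≤ s) : smoothRadiusSq s = s := by
  simp [smoothRadiusSq, Real.smoothTransition.one_of_one_le hs]

/-- The reciprocal of a smoothed radius. -/
def invRadius (p : ℝ × ℝ) : ℝ := (√(smoothRadiusSq (p.1 ^ 2 + p.2 ^ 2)))⁻¹

theorem invRadius_pos (p : ℝ × ℝ) : 0 < invRadius p :=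
  inv_pos.2 (Real.sqrt_pos.2 (smoothRadiusSq_pos (by positivity)))

theorem contDiff_invRadius : ContDiff ℝ (⊤ : ℕ∞) invRadius := by
  have hs : ContDiff ℝ (⊤ : ℕ∞) fun p : ℝ × ℝ => p.1 ^ 2 + p.2 ^ 2 := by fun_prop
  have hm : ContDiff ℝ (⊤ : ℕ∞) fun p : ℝ × ℝ => smoothRadiusSq (p.1 ^ 2 + p.2 ^ 2) :=
    contDiff_const.add ((hs.sub contDiff_const).mul (Real.smoothTransition.contDiff.comp hs))
  have hpos : ∀ p : ℝ × ℝ, 0 < smoothRadiusSq (p.1 ^ 2 + p.2 ^ 2) := fun p =>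
    smoothRadiusSq_pos (by positivity)
  exact (hm.sqrt fun p => (hpos p).ne').inv fun p => (Real.sqrt_pos.2 (hpos p)).ne'

theorem invRadius_flow (t : ℝ) (p : ℝ × ℝ) : invRadius (flow t p) = invRadius p := by
  have h : (flow t p).1 ^ 2 + (flow t p).2 ^ 2 = p.1 ^ 2 + p.2 ^ 2 := by
    simp only [flow]
    linear_combination (p.1 ^ 2 + p.2 ^ 2) * Real.sin_sq_add_cos_sq t
  rw [invRadius, h, invRadius]

/-- A smooth function equal to `x / √(x² + ξ²)` outside the unit disc. -/
def smoothCosAngle (p : ℝ × ℝ) : ℝ := p.1 * invRadius p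

theorem contDiff_smoothCosAngle : ContDiff ℝ (⊤ : ℕ∞) smoothCosAngle :=
  contDiff_fst.mul contDiff_invRadius

theorem posHomog0_smoothCosAngle : PosHomog0 smoothCosAngle := by
  intro lam p hlam hp
  have hscale : (lam * p.1) ^ 2 + (lam * p.2) ^ 2 = lam ^ 2 * (p.1 ^ 2 + p.2 ^ 2) := by ring
  have h1 : 1 ≤ lam ^ 2 * (p.1 ^ 2 + p.2 ^ 2) := one_le_mul_of_one_le_of_one_le
    (one_le_pow₀ hlam) hp
  simp only [smoothCosAngle, invRadius, hscale]
  rw [smoothRadiusSq_of_one_le h1, smoothRadiusSq_of_one_le hp, Real.sqrt_mul (by positivity),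
    Real.sqrt_sq (by linarith)]
  have : 0 < √(p.1 ^ 2 + p.2 ^ 2) := Real.sqrt_pos.2 (by linarith)
  field_simp

theorem resAvg_cos_mul_smoothCosAngle :
    resAvg (fun t p => Real.cos t * smoothCosAngle p) = fun p => (1 / 2) * smoothCosAngle p := by
  funext p
  have hint : ∀ t, Real.cos t * smoothCosAngle (flow t p) =
      invRadius p * p.1 * Real.cos t ^ 2 + invRadius p * p.2 * (Real.sin t * Real.cos t) := by
    intro t
    rw [smoothCosAngle, invRadius_flow]
    simp only [flow]
    ring
  have hc1 : Continuous fun t => invRadius p * p.1 * Real.cos t ^ 2 := by fun_prop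
  have hc2 : Continuous fun t => invRadius p * p.2 * (Real.sin t * Real.cos t) := by fun_prop
  simp only [resAvg, hint]
  rw [intervalIntegral.integral_add (hc1.intervalIntegrable _ _) (hc2.intervalIntegrable _ _),
    intervalIntegral.integral_const_mul, intervalIntegral.integral_const_mul, integral_cos_sq,
    integral_sin_mul_cos₁, smoothCosAngle]
  have := Real.pi_pos
  simp
  field_simp

theorem pbr_resAvg_cos_mul_smoothCosAngle_ne_zero :
    pbr (resAvg fun t p => Real.cos t * smoothCosAngle p) h0 (0, 2) ≠ 0 := by
  have hN : HasFDerivAt invRadius (fderiv ℝ invRadius (0, 2)) (0, 2) :=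
    (contDiff_invRadius.differentiable (by simp) _).hasFDerivAt
  have hA : fderiv ℝ smoothCosAngle (0, 2) = _ := ((hasFDerivAt_fst (𝕜 := ℝ)).mul hN).fderiv
  have hh0 : HasFDerivAt h0 ((2 : ℝ) • ContinuousLinearMap.snd ℝ ℝ ℝ) ((0, 2) : ℝ × ℝ) := by
    have h := (((hasFDerivAt_fst (𝕜 := ℝ) (p := ((0, 2) : ℝ × ℝ))).pow 2).add
      ((hasFDerivAt_snd (𝕜 := ℝ) (p := ((0, 2) : ℝ × ℝ))).pow 2)).mul_const (1 / 2 : ℝ)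
    refine (h.congr_of_eventuallyEq (Eventually.of_forall fun p => ?_)).congr_fderiv ?_
    · simp [h0, div_eq_mul_inv]
    · ext <;> simp
  rw [resAvg_cos_mul_smoothCosAngle]
  simp only [pbr, pdx_const_mul, pdxi_const_mul]
  have hpos : invRadius (0, 2) ≠ 0 := (invRadius_pos _).ne'
  simp only [pdx, pdxi, hh0.fderiv, hA]
  simp [hpos]

/-- The set `𝒱` is dense in `(C⁰_r(𝕋,S⁰_cl), d^{0,0})`. -/
theorem V_is_dense :
    ∀ v : ℝ → ℝ × ℝ → ℝ, InC0Scl v → ∀ ε : ℝ, 0 < ε →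
      ∃ w : ℝ → ℝ × ℝ → ℝ, InV w ∧ dist00 v w < ε := by
  rintro v ⟨hv, v0, μ, hμ, hsm, hhom, hdiff⟩ ε hε
  set g : ℝ → ℝ × ℝ → ℝ := fun t p => Real.cos t * smoothCosAngle p with hg
  set a := pbr (resAvg v0) h0 (0, 2)
  set b := pbr (resAvg g) h0 (0, 2)
  have hb0 : b ≠ 0 := pbr_resAvg_cos_mul_smoothCosAngle_ne_zero
  have hgS : ∀ δ : ℝ, InC0S 0 (fun t p => δ * g t p) := fun δ => by
    have h := inC0S_mul_posHomog0 (c := fun t => δ * Real.cos t) (K := |δ| + 1) (by fun_prop)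
      (fun t => by rw [Real.cos_add_two_pi]) (by positivity)
      (fun t => by
        rw [abs_mul]
        have := mul_le_of_le_one_right (abs_nonneg δ) (Real.abs_cos_le_one t)
        linarith)
      contDiff_smoothCosAngle posHomog0_smoothCosAngle
    simpa only [hg, mul_assoc] using h
  have hgc : Continuous fun q : ℝ × (ℝ × ℝ) => g q.1 q.2 := by
    simpa using (hgS 1).2.1
  have hv0c : Continuous fun q : ℝ × (ℝ × ℝ) => v0 q.1 q.2 := by
    simpa only [Pi.sub_def, sub_sub_cancel] using hv.2.1.sub hdiff.2.1
  have hv0d : ∀ t, Differentiable ℝ (v0 t) := fun t => (hsm t).differentiable (by simp)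
  have hv0avg : Differentiable ℝ (resAvg v0) := by
    obtain ⟨C, hC⟩ := hv.exists_norm_fderiv_le le_rfl
    obtain ⟨D, hD⟩ := hdiff.exists_norm_fderiv_le hμ.le
    refine differentiable_resAvg (C := C + D) hv0c hv0d fun t p => ?_
    have hvd : DifferentiableAt ℝ (v t) p := (hv.2.2.1 t).differentiable (by simp) p
    have heq : fderiv ℝ (v0 t) p = fderiv ℝ (v t) p - fderiv ℝ (fun p => v t p - v0 t p) p := by
      rw [fderiv_fun_sub hvd (hv0d t p), sub_sub_cancel]
    rw [heq]
    exact (norm_sub_le _ _).trans (add_le_add (hC t p) (hD t p))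
  have hgavg : Differentiable ℝ (resAvg g) := by
    rw [hg, resAvg_cos_mul_smoothCosAngle]
    exact (contDiff_smoothCosAngle.differentiable (by simp)).const_mul _
  have hroot : ∀ᶠ δ in 𝓝[≠] (0 : ℝ), a + δ * b ≠ 0 := by
    have hne : ∀ᶠ δ in 𝓝[≠] (0 : ℝ), δ ≠ -a / b := by
      rcases eq_or_ne (-a / b) 0 with h | h
      · rw [h]; exact eventually_mem_nhdsWithin
      · exact eventually_nhdsWithin_of_eventually_nhds (eventually_ne_nhds h.symm)
    filter_upwards [hne] with δ hδ h
    exact hδ (by rw [eq_div_iff hb0]; linarith)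
  obtain ⟨δ, hδroot, hδ⟩ := (hroot.and (((tendsto_dist00_add_const_mul v g).eventually
    (gt_mem_nhds hε)).filter_mono nhdsWithin_le_nhds)).exists
  refine ⟨fun t p => v t p + δ * g t p, ⟨hv.add (hgS δ), fun t p => v0 t p + δ * g t p, μ, hμ,
    fun t => (hsm t).add ((hgS δ).2.2.1 t), fun t lam p hlam hp => ?_, ?_, (0, 2), by norm_num, ?_⟩,
    hδ⟩
  · simp only [hg, hhom t lam p hlam hp, posHomog0_smoothCosAngle lam p hlam hp]
  · simpa only [add_sub_add_right_eq_sub] using hdiff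
  · rwa [resAvg_add_const_mul δ hv0c hgc, pbr_add_const_mul δ h0 _ hv0avg hgavg]

end
end

section
/- Solution of the homological equation at the symbol level: let m ∈ ℝ and h ∈ C⁰(𝕋,S^m). Define χ(t,x,ξ) := ∫₀ᵗ ( h(s,x,ξ) − (1/2π)∫₀^{2π} h(s₁,x,ξ) ds₁ ) ds. Then χ is 2π-periodic in t, continuously differentiable in t, for each t the function χ(t,·) belongs to S^m, the seminorms Σ_{α+β≤j} sup_{t,x,ξ} |∂_x^α∂_ξ^β∂_t^ℓ χ(t,x,ξ)|(1+x²+ξ²)^{−m+(α+β)/2} are finite for every j ∈ ℕ and ℓ ∈ {0,1}, χ satisfies ∂_t χ(t,x,ξ) = h(t,x,ξ) − (1/2π)∫₀^{2π} h(s,x,ξ) ds, and if h is real valued then so is χ. -/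
open Real MeasureTheory Filter Topology

noncomputable section

/-- Partial derivative in the first variable `x` (complex valued symbols). -/
def pdxC (f : ℝ × ℝ → ℂ) : ℝ × ℝ → ℂ := fun p => fderiv ℝ f p (1, 0)

/-- Partial derivative in the second variable `ξ` (complex valued symbols). -/
def pdxiC (f : ℝ × ℝ → ℂ) : ℝ × ℝ → ℂ := fun p => fderiv ℝ f p (0, 1)

/-- Membership in `C⁰(𝕋, S^m)`: 2π-periodicity and continuity in `t`, smoothness in
`(x,ξ)`, and uniform symbol bounds of order `m`. -/
def InC0SC (m : ℝ) (v : ℝ → ℝ × ℝ → ℂ) : Prop :=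
  (∀ t p, v (t + 2 * π) p = v t p) ∧
  Continuous (fun q : ℝ × (ℝ × ℝ) => v q.1 q.2) ∧
  (∀ t, ContDiff ℝ (⊤ : ℕ∞) (v t)) ∧
  ∀ α β : ℕ, ∃ C > 0, ∀ (t : ℝ) (p : ℝ × ℝ),
    ‖pdxC^[α] (pdxiC^[β] (v t)) p‖ ≤
      C * (1 + p.1 ^ 2 + p.2 ^ 2) ^ (m - ((α : ℝ) + β) / 2)

/-- Time average `(1/2π)∫₀^{2π} h(s₁,x,ξ) ds₁`. -/
def havg (h : ℝ → ℝ × ℝ → ℂ) (p : ℝ × ℝ) : ℂ :=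
  (1 / (2 * π) : ℝ) • ∫ s in (0:ℝ)..(2 * π), h s p

/-- Solution of the homological equation:
`χ(t,x,ξ) := ∫₀ᵗ ( h(s,x,ξ) − (1/2π)∫₀^{2π} h(s₁,x,ξ) ds₁ ) ds`. -/
def chi (h : ℝ → ℝ × ℝ → ℂ) (t : ℝ) (p : ℝ × ℝ) : ℂ :=
  ∫ s in (0:ℝ)..t, (h s p - havg h p)

/-- The directional derivative of `f` along the constant vector `e`. -/
def dirDeriv (e : ℝ × ℝ) (f : ℝ × ℝ → ℂ) : ℝ × ℝ → ℂ := fun p => fderiv ℝ f p e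

theorem pdxC_eq_dirDeriv : pdxC = dirDeriv (1, 0) := rfl

theorem pdxiC_eq_dirDeriv : pdxiC = dirDeriv (0, 1) := rfl

theorem fderiv_eq_pdxC_pdxiC (f : ℝ × ℝ → ℂ) (p : ℝ × ℝ) :
    fderiv ℝ f p = (ContinuousLinearMap.fst ℝ ℝ ℝ).smulRight (pdxC f p) +
      (ContinuousLinearMap.snd ℝ ℝ ℝ).smulRight (pdxiC f p) := by
  ext <;> simp [pdxC, pdxiC]

theorem ContDiff.dirDeriv {f : ℝ × ℝ → ℂ} (hf : ContDiff ℝ (⊤ : ℕ∞) f) (e : ℝ × ℝ) :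
    ContDiff ℝ (⊤ : ℕ∞) (dirDeriv e f) :=
  (hf.fderiv_right (m := (⊤ : ℕ∞)) (by norm_cast)).clm_apply contDiff_const

theorem ContDiff.iterate_dirDeriv {f : ℝ × ℝ → ℂ} (hf : ContDiff ℝ (⊤ : ℕ∞) f) (e : ℝ × ℝ)
    (n : ℕ) : ContDiff ℝ (⊤ : ℕ∞) ((_root_.dirDeriv e)^[n] f) := by
  induction n generalizing f with
  | zero => exact hf
  | succ n ih => exact ih (hf.dirDeriv e)

theorem dirDeriv_comm {f : ℝ × ℝ → ℂ} (hf : ContDiff ℝ (⊤ : ℕ∞) f) (e e' : ℝ × ℝ) :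
    dirDeriv e (dirDeriv e' f) = dirDeriv e' (dirDeriv e f) := by
  have hd : Differentiable ℝ (fderiv ℝ f) :=
    (hf.fderiv_right (m := (⊤ : ℕ∞)) (by norm_cast)).differentiable (by simp)
  have key : ∀ (a b p : ℝ × ℝ), dirDeriv a (dirDeriv b f) p = fderiv ℝ (fderiv ℝ f) p a b := by
    intro a b p
    change fderiv ℝ (fun q => fderiv ℝ f q b) p a = _
    rw [fderiv_clm_apply (hd p) (by fun_prop)]
    simp
  funext p
  rw [key, key]
  exact (hf.contDiffAt.isSymmSndFDerivAt
    (by rw [minSmoothness_of_isRCLikeNormedField]; exact WithTop.coe_le_coe.2 le_top)) e e'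

theorem iterate_dirDeriv_comm {f : ℝ × ℝ → ℂ} (hf : ContDiff ℝ (⊤ : ℕ∞) f) (e e' : ℝ × ℝ)
    (n : ℕ) : (dirDeriv e)^[n] (dirDeriv e' f) = dirDeriv e' ((dirDeriv e)^[n] f) := by
  induction n generalizing f with
  | zero => rfl
  | succ n ih =>
    rw [Function.iterate_succ_apply, Function.iterate_succ_apply, dirDeriv_comm hf,
      ih (hf.dirDeriv e)]

theorem iterate_dirDeriv_sub {f g : ℝ × ℝ → ℂ} (hf : ContDiff ℝ (⊤ : ℕ∞) f)
    (hg : ContDiff ℝ (⊤ : ℕ∞) g) (e : ℝ × ℝ) (n : ℕ) :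
    (dirDeriv e)^[n] (f - g) = (dirDeriv e)^[n] f - (dirDeriv e)^[n] g := by
  induction n generalizing f g with
  | zero => rfl
  | succ n ih =>
    have h1 : dirDeriv e (f - g) = dirDeriv e f - dirDeriv e g := by
      funext p
      simp [dirDeriv, fderiv_sub (hf.differentiable (by simp) p) (hg.differentiable (by simp) p)]
    simp only [Function.iterate_succ_apply]
    rw [h1, ih (hf.dirDeriv e) (hg.dirDeriv e)]

theorem iterate_dirDeriv_const_smul {f : ℝ × ℝ → ℂ} (hf : ContDiff ℝ (⊤ : ℕ∞) f) (c : ℝ)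
    (e : ℝ × ℝ) (n : ℕ) : (dirDeriv e)^[n] (c • f) = c • (dirDeriv e)^[n] f := by
  induction n generalizing f with
  | zero => rfl
  | succ n ih =>
    have h1 : dirDeriv e (c • f) = c • dirDeriv e f := by
      funext p
      simp [dirDeriv, fderiv_const_smul (hf.differentiable (by simp) p)]
    simp only [Function.iterate_succ_apply]
    rw [h1, ih (hf.dirDeriv e)]

theorem pdxC_pdxiC_iterate_sub {f g : ℝ × ℝ → ℂ} (hf : ContDiff ℝ (⊤ : ℕ∞) f)
    (hg : ContDiff ℝ (⊤ : ℕ∞) g) (α β : ℕ) :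
    pdxC^[α] (pdxiC^[β] (f - g)) = pdxC^[α] (pdxiC^[β] f) - pdxC^[α] (pdxiC^[β] g) := by
  rw [pdxC_eq_dirDeriv, pdxiC_eq_dirDeriv, iterate_dirDeriv_sub hf hg,
    iterate_dirDeriv_sub (hf.iterate_dirDeriv _ _) (hg.iterate_dirDeriv _ _)]

theorem pdxC_pdxiC_iterate_const_smul {f : ℝ × ℝ → ℂ} (hf : ContDiff ℝ (⊤ : ℕ∞) f) (c : ℝ)
    (α β : ℕ) : pdxC^[α] (pdxiC^[β] (c • f)) = c • pdxC^[α] (pdxiC^[β] f) := by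
  rw [pdxC_eq_dirDeriv, pdxiC_eq_dirDeriv, iterate_dirDeriv_const_smul hf,
    iterate_dirDeriv_const_smul (hf.iterate_dirDeriv _ _)]

/-- Families of smooth functions, measurable in the parameter, all of whose derivatives are
dominated, uniformly in the parameter, by continuous functions. -/
structure DominatedFamily (v : ℝ → ℝ × ℝ → ℂ) : Prop where
  smooth : ∀ t, ContDiff ℝ (⊤ : ℕ∞) (v t)
  measurable : ∀ p, Measurable fun t => v t p
  dominated : ∀ α β : ℕ, ∃ B : ℝ × ℝ → ℝ, Continuous B ∧
    ∀ t p, ‖pdxC^[α] (pdxiC^[β] (v t)) p‖ ≤ B p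

namespace DominatedFamily

variable {v : ℝ → ℝ × ℝ → ℂ}

theorem measurable_dirDeriv (hv : DominatedFamily v) (e p : ℝ × ℝ) :
    Measurable fun t => dirDeriv e (v t) p := by
  refine measurable_of_tendsto_metrizable
    (f := fun (n : ℕ) t => (n : ℝ) • (v t (p + (n : ℝ)⁻¹ • e) - v t p))
    (fun n => ((hv.measurable _).sub (hv.measurable _)).const_smul (n : ℝ)) ?_
  rw [tendsto_pi_nhds]
  intro t
  refine HasFDerivAt.lim ((hv.smooth t).differentiable (by simp) p).hasFDerivAt e ?_
  simpa using tendsto_natCast_atTop_atTop (R := ℝ)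

protected theorem pdxC (hv : DominatedFamily v) : DominatedFamily fun t => pdxC (v t) where
  smooth t := (hv.smooth t).dirDeriv _
  measurable p := hv.measurable_dirDeriv _ p
  dominated α β := by
    obtain ⟨B, hB, h⟩ := hv.dominated (α + 1) β
    refine ⟨B, hB, fun t p => ?_⟩
    have := h t p
    rwa [Function.iterate_succ_apply, pdxC_eq_dirDeriv, pdxiC_eq_dirDeriv,
      ← iterate_dirDeriv_comm (hv.smooth t)] at this

protected theorem pdxiC (hv : DominatedFamily v) : DominatedFamily fun t => pdxiC (v t) where
  smooth t := (hv.smooth t).dirDeriv _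
  measurable p := hv.measurable_dirDeriv _ p
  dominated α β := hv.dominated α (β + 1)

theorem intervalIntegrable (hv : DominatedFamily v) (a b : ℝ) (p : ℝ × ℝ) :
    IntervalIntegrable (fun t => v t p) volume a b := by
  obtain ⟨B, -, h⟩ := hv.dominated 0 0
  exact (intervalIntegrable_const (c := B p)).mono_fun' (hv.measurable p).aestronglyMeasurable
    (Eventually.of_forall fun t => h t p)

theorem hasFDerivAt_integral (hv : DominatedFamily v) (a b : ℝ) (p : ℝ × ℝ) :
    HasFDerivAt (fun q => ∫ t in a..b, v t q) (∫ t in a..b, fderiv ℝ (v t) p) p ∧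
      IntervalIntegrable (fun t => fderiv ℝ (v t) p) volume a b := by
  obtain ⟨B₁, hB₁, h₁⟩ := hv.dominated 1 0
  obtain ⟨B₂, hB₂, h₂⟩ := hv.dominated 0 1
  have hbound : ∀ t q, ‖fderiv ℝ (v t) q‖ ≤ B₁ q + B₂ q := by
    intro t q
    rw [fderiv_eq_pdxC_pdxiC]
    refine (norm_add_le _ _).trans (add_le_add ?_ ?_)
    · rw [ContinuousLinearMap.norm_smulRight_apply]
      exact (mul_le_of_le_one_left (norm_nonneg _)
        (ContinuousLinearMap.norm_fst_le ℝ ℝ ℝ)).trans (h₁ t q)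
    · rw [ContinuousLinearMap.norm_smulRight_apply]
      exact (mul_le_of_le_one_left (norm_nonneg _)
        (ContinuousLinearMap.norm_snd_le ℝ ℝ ℝ)).trans (h₂ t q)
  have hmeas : StronglyMeasurable fun t => fderiv ℝ (v t) p := by
    simp only [fderiv_eq_pdxC_pdxiC]
    exact (((ContinuousLinearMap.smulRightL ℝ (ℝ × ℝ) ℂ
      (ContinuousLinearMap.fst ℝ ℝ ℝ)).continuous.comp_stronglyMeasurable
        (hv.pdxC.measurable p).stronglyMeasurable)).add
      (((ContinuousLinearMap.smulRightL ℝ (ℝ × ℝ) ℂ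
      (ContinuousLinearMap.snd ℝ ℝ ℝ)).continuous.comp_stronglyMeasurable
        (hv.pdxiC.measurable p).stronglyMeasurable))
  have hs : {q | B₁ q + B₂ q < B₁ p + B₂ p + 1} ∈ 𝓝 p :=
    (isOpen_lt (hB₁.add hB₂) continuous_const).mem_nhds (by simp)
  refine ⟨intervalIntegral.hasFDerivAt_integral_of_dominated_of_fderiv_le
    (F := fun q t => v t q) (F' := fun q t => fderiv ℝ (v t) q) hs
    (Eventually.of_forall fun q => (hv.measurable q).aestronglyMeasurable)
    (hv.intervalIntegrable a b p) hmeas.aestronglyMeasurable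
    (bound := fun _ => B₁ p + B₂ p + 1)
    (Eventually.of_forall fun t _ q hq => (hbound t q).trans (le_of_lt hq))
    intervalIntegrable_const
    (Eventually.of_forall fun t _ q _ =>
      ((hv.smooth t).differentiable (by simp) q).hasFDerivAt), ?_⟩
  exact (intervalIntegrable_const (c := B₁ p + B₂ p)).mono_fun' hmeas.aestronglyMeasurable
    (Eventually.of_forall fun t => hbound t p)

theorem dirDeriv_integral (hv : DominatedFamily v) (a b : ℝ) (e : ℝ × ℝ) :
    dirDeriv e (fun q => ∫ t in a..b, v t q) = fun q => ∫ t in a..b, dirDeriv e (v t) q := by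
  funext p
  obtain ⟨hd, hi⟩ := hv.hasFDerivAt_integral a b p
  rw [dirDeriv, hd.fderiv, ContinuousLinearMap.intervalIntegral_apply hi]
  rfl

theorem contDiff_integral (hv : DominatedFamily v) (a b : ℝ) :
    ContDiff ℝ (⊤ : ℕ∞) fun p => ∫ t in a..b, v t p := by
  rw [contDiff_infty]
  intro n
  induction n generalizing v with
  | zero =>
    exact contDiff_zero.2 (Differentiable.continuous (𝕜 := ℝ) fun p =>
      (hv.hasFDerivAt_integral a b p).1.differentiableAt)
  | succ n ih =>
    push_cast
    rw [contDiff_succ_iff_fderiv]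
    refine ⟨fun p => (hv.hasFDerivAt_integral a b p).1.differentiableAt, by simp, ?_⟩
    rw [funext (fderiv_eq_pdxC_pdxiC _), pdxC_eq_dirDeriv, pdxiC_eq_dirDeriv,
      hv.dirDeriv_integral, hv.dirDeriv_integral]
    exact (contDiff_const.smulRight (ih hv.pdxC)).add (contDiff_const.smulRight (ih hv.pdxiC))

theorem pdxC_pdxiC_iterate_integral (hv : DominatedFamily v) (a b : ℝ) (α β : ℕ) :
    pdxC^[α] (pdxiC^[β] fun q => ∫ t in a..b, v t q) =
      fun q => ∫ t in a..b, pdxC^[α] (pdxiC^[β] (v t)) q := by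
  induction β generalizing v with
  | zero =>
    induction α generalizing v with
    | zero => rfl
    | succ α ih =>
      simp only [Function.iterate_succ_apply, Function.iterate_zero, id] at ih ⊢
      rw [← ih hv.pdxC, pdxC_eq_dirDeriv, hv.dirDeriv_integral]
  | succ β ih =>
    simp only [Function.iterate_succ_apply]
    rw [← ih hv.pdxiC, pdxiC_eq_dirDeriv, hv.dirDeriv_integral]

theorem sub_const (hv : DominatedFamily v) {g : ℝ × ℝ → ℂ} (hg : ContDiff ℝ (⊤ : ℕ∞) g) :
    DominatedFamily fun t => v t - g where
  smooth t := (hv.smooth t).sub hg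
  measurable p := (hv.measurable p).sub_const _
  dominated α β := by
    obtain ⟨B, hB, h⟩ := hv.dominated α β
    have hg' : Continuous (pdxC^[α] (pdxiC^[β] g)) :=
      ((hg.iterate_dirDeriv (0, 1) β).iterate_dirDeriv (1, 0) α).continuous
    refine ⟨fun p => B p + ‖pdxC^[α] (pdxiC^[β] g) p‖, hB.add hg'.norm, fun t p => ?_⟩
    rw [pdxC_pdxiC_iterate_sub (hv.smooth t) hg]
    exact (norm_sub_le _ _).trans (add_le_add (h t p) le_rfl)

end DominatedFamily

theorem InC0SC.dominatedFamily {m : ℝ} {h : ℝ → ℝ × ℝ → ℂ} (hh : InC0SC m h) :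
    DominatedFamily h where
  smooth := hh.2.2.1
  measurable p := (hh.2.1.comp (Continuous.prodMk_left p)).measurable
  dominated α β := by
    obtain ⟨C, -, hC⟩ := hh.2.2.2 α β
    refine ⟨_, ?_, hC⟩
    refine continuous_const.mul (Continuous.rpow_const (by fun_prop) fun p => Or.inl ?_)
    positivity

theorem contDiff_havg {h : ℝ → ℝ × ℝ → ℂ} (hh : DominatedFamily h) :
    ContDiff ℝ (⊤ : ℕ∞) (havg h) :=
  (hh.contDiff_integral 0 (2 * π)).const_smul (1 / (2 * π) : ℝ)

theorem norm_pdxC_pdxiC_iterate_havg_le {h : ℝ → ℝ × ℝ → ℂ} (hh : DominatedFamily h) {α β : ℕ}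
    {p : ℝ × ℝ} {K : ℝ} (hK : ∀ t, ‖pdxC^[α] (pdxiC^[β] (h t)) p‖ ≤ K) :
    ‖pdxC^[α] (pdxiC^[β] (havg h)) p‖ ≤ K := by
  have heq : havg h = (1 / (2 * π) : ℝ) • fun q => ∫ s in (0:ℝ)..(2 * π), h s q := rfl
  rw [heq, pdxC_pdxiC_iterate_const_smul (hh.contDiff_integral _ _),
    hh.pdxC_pdxiC_iterate_integral, Pi.smul_apply, norm_smul]
  have hπ : (0 : ℝ) < 2 * π := two_pi_pos
  have := intervalIntegral.norm_integral_le_of_norm_le_const (a := 0) (b := 2 * π)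
    fun t _ => hK t
  rw [sub_zero, abs_of_pos hπ] at this
  rw [Real.norm_of_nonneg (by positivity), one_div, inv_mul_le_iff₀ hπ]
  linarith

theorem chi_add_two_pi {h : ℝ → ℝ × ℝ → ℂ} (hper : ∀ t p, h (t + 2 * π) p = h t p)
    {p : ℝ × ℝ} (hc : Continuous fun t => h t p) (t : ℝ) :
    chi h (t + 2 * π) p = chi h t p := by
  have hc' : Continuous fun t => h t p - havg h p := hc.sub continuous_const
  have hper' : Function.Periodic (fun t => h t p - havg h p) (2 * π) := fun s => by
    simp [hper s p]
  have hzero : ∫ s in (0:ℝ)..(2 * π), (h s p - havg h p) = 0 := by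
    rw [intervalIntegral.integral_sub (hc.intervalIntegrable _ _) intervalIntegrable_const,
      intervalIntegral.integral_const, sub_zero, havg, smul_smul,
      mul_one_div_cancel two_pi_pos.ne', one_smul, sub_self]
  have hadd := intervalIntegral.integral_add_adjacent_intervals
    (hc'.intervalIntegrable (μ := volume) 0 t) (hc'.intervalIntegrable t (t + 2 * π))
  rw [hper'.intervalIntegral_add_eq t 0, zero_add, hzero, add_zero] at hadd
  exact hadd.symm

theorem intervalIntegral_im_eq_zero {f : ℝ → ℂ} (hf : ∀ t, (f t).im = 0) (a b : ℝ) :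
    (∫ t in a..b, f t).im = 0 := by
  have : f = fun t => ((f t).re : ℂ) := funext fun t => Complex.ext rfl (by simp [hf t])
  rw [this, intervalIntegral.integral_ofReal, Complex.ofReal_im]

/-- Solution of the homological equation at the symbol level. -/
theorem homological_equation (m : ℝ) (h : ℝ → ℝ × ℝ → ℂ) (hh : InC0SC m h) :
    -- χ is 2π-periodic in t
    (∀ t p, chi h (t + 2 * π) p = chi h t p) ∧
    -- χ is differentiable in t with ∂_t χ(t,x,ξ) = h(t,x,ξ) − (1/2π)∫₀^{2π} h(s,x,ξ) ds
    (∀ (p : ℝ × ℝ) (t : ℝ), HasDerivAt (fun s => chi h s p) (h t p - havg h p) t) ∧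
    -- for each t, χ(t,·) is smooth
    (∀ t, ContDiff ℝ (⊤ : ℕ∞) (fun p => chi h t p)) ∧
    -- uniform symbol bounds of order m for ∂_x^α ∂_ξ^β ∂_t^ℓ χ, ℓ ∈ {0,1}
    (∀ α β : ℕ, ∃ C > 0, ∀ (t : ℝ) (p : ℝ × ℝ),
      ‖pdxC^[α] (pdxiC^[β] (fun q => chi h t q)) p‖ ≤
        C * (1 + p.1 ^ 2 + p.2 ^ 2) ^ (m - ((α : ℝ) + β) / 2) ∧
      ‖pdxC^[α] (pdxiC^[β] (fun q => h t q - havg h q)) p‖ ≤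
        C * (1 + p.1 ^ 2 + p.2 ^ 2) ^ (m - ((α : ℝ) + β) / 2)) ∧
    -- if h is real valued then so is χ
    ((∀ t p, (h t p).im = 0) → ∀ t p, (chi h t p).im = 0) := by
  have hD := hh.dominatedFamily
  obtain ⟨hper, hcont, -, hbound⟩ := hh
  have hc : ∀ p, Continuous fun t => h t p := fun p => hcont.comp (Continuous.prodMk_left p)
  have hchi : ∀ t p, chi h (t + 2 * π) p = chi h t p := fun t p => chi_add_two_pi hper (hc p) t
  have hV := hD.sub_const (contDiff_havg hD)
  refine ⟨hchi, fun p t => ?_, fun t => hV.contDiff_integral 0 t, fun α β => ?_,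
    fun him t p => ?_⟩
  · have hc' : Continuous fun t => h t p - havg h p := (hc p).sub continuous_const
    exact hc'.integral_hasStrictDerivAt 0 t |>.hasDerivAt
  · obtain ⟨C, hC, hb⟩ := hbound α β
    have hπ : (0 : ℝ) < 2 * π := two_pi_pos
    have hsub : ∀ t p, ‖pdxC^[α] (pdxiC^[β] (h t - havg h)) p‖ ≤
        2 * C * (1 + p.1 ^ 2 + p.2 ^ 2) ^ (m - ((α : ℝ) + β) / 2) := by
      intro t p
      rw [pdxC_pdxiC_iterate_sub (hD.smooth t) (contDiff_havg hD)]
      refine (norm_sub_le _ _).trans ?_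
      have := norm_pdxC_pdxiC_iterate_havg_le hD fun s => hb s p
      linarith [hb t p]
    refine ⟨(2 * π + 1) * (2 * C), by positivity, fun t p => ?_⟩
    have hw : 0 ≤ 2 * C * (1 + p.1 ^ 2 + p.2 ^ 2) ^ (m - ((α : ℝ) + β) / 2) := by positivity
    rw [mul_assoc]
    constructor
    · have hchi' : Function.Periodic (fun s q => chi h s q) (2 * π) := fun s => funext (hchi s)
      obtain ⟨s, ⟨hs0, hs1⟩, hs⟩ := hchi'.exists_mem_Ico₀ hπ t
      have hs' : (fun q => chi h t q) = fun q => ∫ r in (0:ℝ)..s, (h r - havg h) q := hs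
      rw [hs', hV.pdxC_pdxiC_iterate_integral]
      refine (intervalIntegral.norm_integral_le_of_norm_le_const fun r _ => hsub r p).trans ?_
      rw [sub_zero, abs_of_nonneg hs0, mul_comm]
      gcongr
      linarith
    · exact (hsub t p).trans (le_mul_of_one_le_left hw (by linarith))
  · refine intervalIntegral_im_eq_zero (fun s => ?_) 0 t
    simp [havg, him, intervalIntegral_im_eq_zero fun s => him s p]

end
end

section
/- Anti-Wick quantization is well defined, bounded and positivity preserving: let a : ℝ² → ℝ be measurable and bounded. Then for all u, w ∈ L²(ℝ,ℂ) the function (q,p) ↦ a(q,p)·⟨u,Φ_{(q,p)}⟩·⟨Φ_{(q,p)},w⟩ is integrable on ℝ², and there exists a unique bounded linear operator Op^{aw}(a) on L²(ℝ,ℂ) such that ⟨Op^{aw}(a)u, w⟩ = ∫_{ℝ²} a(q,p)·⟨u,Φ_{(q,p)}⟩·⟨Φ_{(q,p)},w⟩ dq dp for all u,w. Moreover, if a(q,p) ≥ 0 for all (q,p) then ⟨Op^{aw}(a)u, u⟩ ≥ 0 for every u ∈ L²(ℝ,ℂ). -/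
open Real MeasureTheory

noncomputable section

/-- The coherent state `Φ_z = 𝒯_z Φ₀`, where `Φ₀(x) = π^{-1/4} e^{-x²/2}` and
`(𝒯_{(q,p)}u)(x) = e^{-ipq/2} e^{ixp} u(x-q)`. -/
def coh (z : ℝ × ℝ) (x : ℝ) : ℂ :=
  Complex.exp (-(Complex.I * z.2 * z.1) / 2) * Complex.exp (Complex.I * x * z.2) *
    ((Real.pi ^ (-(1 : ℝ) / 4) : ℝ) : ℂ) * ((Real.exp (-(x - z.1) ^ 2 / 2) : ℝ) : ℂ)

/-- The `L²` pairing `⟨u,v⟩ = ∫ u(x) conj(v(x)) dx`, linear in the first argument. -/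
def pair (u v : ℝ → ℂ) : ℂ := ∫ x : ℝ, u x * (starRingEnd ℂ) (v x)

open scoped FourierTransform ContDiff SchwartzMap ENNReal InnerProductSpace

/-- On `L¹ ∩ L²` the `L²` Fourier transform is given by the Fourier integral. -/
theorem fourier_toLp_ae_eq {V F : Type*} [NormedAddCommGroup V] [InnerProductSpace ℝ V]
    [FiniteDimensional ℝ V] [MeasurableSpace V] [BorelSpace V] [NormedAddCommGroup F]
    [InnerProductSpace ℂ F] [CompleteSpace F] {f : V → F}
    (hf : Integrable f) (hf2 : MemLp f 2) :
    (𝓕 (hf2.toLp f) : Lp F 2 (volume : Measure V)) =ᵐ[volume] 𝓕 f := by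
  have hcont : Continuous (𝓕 f) :=
    VectorFourier.fourierIntegral_continuous Real.continuous_fourierChar
      (L := innerₗ V) continuous_inner hf
  refine ae_eq_of_integral_contDiff_smul_eq
    ((Lp.memLp (𝓕 (hf2.toLp f) : Lp F 2 (volume : Measure V))).locallyIntegrable one_le_two)
    hcont.locallyIntegrable fun g g_smooth g_cpt ↦ ?_
  have hg₁ : HasCompactSupport (Complex.ofRealCLM ∘ g) := g_cpt.comp_left rfl
  have hg₂ : ContDiff ℝ ∞ (Complex.ofRealCLM ∘ g) := by fun_prop
  set φ : 𝓢(V, ℂ) := hg₁.toSchwartzMap hg₂ with hφ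
  have hφg (x : V) : φ x = (g x : ℂ) := by simp [hφ]
  have h := congrArg (· φ) (Lp.fourier_toTemperedDistribution_eq (hf2.toLp f))
  simp only [TemperedDistribution.fourier_apply, Lp.toTemperedDistribution_apply] at h
  calc ∫ x, g x • (𝓕 (hf2.toLp f) : Lp F 2 (volume : Measure V)) x
      = ∫ x, φ x • (𝓕 (hf2.toLp f) : Lp F 2 (volume : Measure V)) x := by simp [hφg]
    _ = ∫ x, 𝓕 φ x • f x := by
      rw [← h]
      refine integral_congr_ae ?_
      filter_upwards [hf2.coeFn_toLp] with x hx
      rw [hx]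
    _ = ∫ x, φ x • 𝓕 f x := by
      simpa using! VectorFourier.integral_fourierIntegral_smul_eq_flip (L := innerₗ V)
        Real.continuous_fourierChar continuous_inner φ.integrable hf
    _ = ∫ x, g x • 𝓕 f x := by simp [hφg]

/-- Plancherel's theorem for functions in `L¹ ∩ L²`. -/
theorem eLpNorm_fourier_eq {V F : Type*} [NormedAddCommGroup V] [InnerProductSpace ℝ V]
    [FiniteDimensional ℝ V] [MeasurableSpace V] [BorelSpace V] [NormedAddCommGroup F]
    [InnerProductSpace ℂ F] [CompleteSpace F] {f : V → F}
    (hf : Integrable f) (hf2 : MemLp f 2) :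
    eLpNorm (𝓕 f) 2 volume = eLpNorm f 2 volume := by
  rw [← eLpNorm_congr_ae (fourier_toLp_ae_eq hf hf2), ← Lp.enorm_def,
    ← eLpNorm_congr_ae hf2.coeFn_toLp, ← Lp.enorm_def,
    ← ofReal_norm, ← ofReal_norm, Lp.norm_fourier_eq]

theorem continuous_uncurry_coh : Continuous (Function.uncurry coh) := by
  unfold Function.uncurry coh
  fun_prop

theorem norm_coh_sq (z : ℝ × ℝ) (x : ℝ) :
    ‖coh z x‖ ^ 2 = π ^ (-(1 : ℝ) / 2) * rexp (-1 * (x - z.1) ^ 2) := by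
  have h₁ : ‖Complex.exp (-(Complex.I * z.2 * z.1) / 2)‖ = 1 := by
    rw [Complex.norm_exp]; simp
  have h₂ : ‖Complex.exp (Complex.I * x * z.2)‖ = 1 := by
    rw [Complex.norm_exp]; simp
  simp only [coh, norm_mul, h₁, h₂, Complex.norm_real, one_mul, Real.norm_eq_abs, mul_pow, sq_abs]
  rw [← Real.exp_nat_mul, ← Real.rpow_mul_natCast pi_pos.le]
  congr 2 <;> push_cast <;> ring

theorem norm_coh_le (z : ℝ × ℝ) (x : ℝ) : ‖coh z x‖ ≤ 1 := by
  refine (sq_le_one_iff₀ (norm_nonneg _)).1 ?_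
  rw [norm_coh_sq]
  refine mul_le_one₀ (Real.rpow_le_one_of_one_le_of_nonpos ?_ (by norm_num)) (exp_pos _).le ?_
  · linarith [pi_gt_three]
  · rw [Real.exp_le_one_iff]; nlinarith [sq_nonneg (x - z.1)]

theorem continuous_coh (z : ℝ × ℝ) : Continuous (coh z) := by
  unfold coh
  fun_prop

theorem memLp_coh (z : ℝ × ℝ) : MemLp (coh z) 2 := by
  rw [memLp_two_iff_integrable_sq_norm (continuous_coh z).aestronglyMeasurable]
  simp_rw [norm_coh_sq]
  exact ((integrable_exp_neg_mul_sq one_pos).comp_sub_right z.1).const_mul _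

theorem lintegral_enorm_coh_sq (x : ℝ) : ∫⁻ q : ℝ, ‖coh (q, 0) x‖ₑ ^ 2 = 1 := by
  have h (q : ℝ) : ‖coh (q, 0) x‖ₑ ^ 2
      = ENNReal.ofReal (π ^ (-(1 : ℝ) / 2) * rexp (-1 * (x - q) ^ 2)) := by
    rw [← ofReal_norm, ← ENNReal.ofReal_pow (norm_nonneg _), norm_coh_sq]
  simp_rw [h]
  rw [lintegral_sub_left_eq_self
      (fun q ↦ ENNReal.ofReal (π ^ (-(1 : ℝ) / 2) * rexp (-1 * q ^ 2))) x,
    ← ofReal_integral_eq_lintegral_ofReal ((integrable_exp_neg_mul_sq one_pos).const_mul _)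
      (.of_forall fun q ↦ by positivity), integral_const_mul, integral_gaussian, div_one,
    Real.sqrt_eq_rpow, ← Real.rpow_add pi_pos]
  norm_num

theorem pair_eq_inner (u w : Lp ℂ 2 (volume : Measure ℝ)) : pair u w = ⟪w, u⟫_ℂ := by
  rw [L2.inner_def]
  rfl

theorem pair_eq_inner_toLp (u : Lp ℂ 2 (volume : Measure ℝ)) {f : ℝ → ℂ} (hf : MemLp f 2) :
    pair u f = ⟪hf.toLp f, u⟫_ℂ := by
  rw [← pair_eq_inner]
  refine integral_congr_ae ?_
  filter_upwards [hf.coeFn_toLp] with x hx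
  rw [hx]

theorem conj_pair (u v : ℝ → ℂ) : (starRingEnd ℂ) (pair u v) = pair v u := by
  simp only [pair, ← integral_conj, map_mul, Complex.conj_conj, mul_comm]

theorem stronglyMeasurable_pair_coh (u : Lp ℂ 2 (volume : Measure ℝ)) :
    StronglyMeasurable fun z ↦ pair u (coh z) := by
  refine StronglyMeasurable.integral_prod_right (f := fun z x ↦ u x * (starRingEnd ℂ) (coh z x)) ?_
  exact ((Lp.stronglyMeasurable u).comp_measurable measurable_snd).mul
    (Complex.continuous_conj.comp continuous_uncurry_coh).stronglyMeasurable

/-- Up to a phase, `p ↦ ⟨u, Φ_{(q,p)}⟩` is the Fourier transform of `u` localized near `q`. -/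
theorem enorm_pair_coh (u : ℝ → ℂ) (q p : ℝ) :
    ‖pair u (coh (q, p))‖ₑ =
      ‖𝓕 (fun x ↦ u x * (starRingEnd ℂ) (coh (q, 0) x)) ((2 * π)⁻¹ * p)‖ₑ := by
  have h (x : ℝ) : u x * (starRingEnd ℂ) (coh (q, p) x) =
      Complex.exp (Complex.I * p * q / 2) *
        (Complex.exp (↑(-2 * π * x * ((2 * π)⁻¹ * p)) * Complex.I) •
          (u x * (starRingEnd ℂ) (coh (q, 0) x))) := by
    have hπ : -2 * π * x * ((2 * π)⁻¹ * p) = -(x * p) := by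
      field_simp [pi_ne_zero]
    rw [hπ]
    simp only [coh, map_mul, ← Complex.exp_conj, Complex.conj_ofReal, map_neg, map_div₀,
      Complex.conj_I, Complex.conj_ofNat, smul_eq_mul, Complex.ofReal_zero, Complex.ofReal_neg,
      Complex.ofReal_mul, mul_zero, zero_mul, neg_zero, zero_div, Complex.exp_zero, one_mul]
    ring_nf
  have hphase : ‖Complex.exp (Complex.I * p * q / 2)‖ₑ = 1 := by
    rw [← ofReal_norm, Complex.norm_exp]; simp
  rw [pair, Real.fourier_real_eq_integral_exp_smul]
  simp_rw [h]
  rw [integral_const_mul, enorm_mul, hphase, one_mul]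

theorem eLpNorm_two_sq {α E : Type*} [MeasurableSpace α] [NormedAddCommGroup E] (f : α → E)
    (μ : Measure α) : eLpNorm f 2 μ ^ 2 = ∫⁻ x, ‖f x‖ₑ ^ 2 ∂μ := by
  simpa using eLpNorm_nnreal_pow_eq_lintegral (f := f) (μ := μ) (p := 2) two_ne_zero

theorem lintegral_enorm_pair_coh_sq_right (u : Lp ℂ 2 (volume : Measure ℝ)) (q : ℝ) :
    ∫⁻ p : ℝ, ‖pair u (coh (q, p))‖ₑ ^ 2 =
      ENNReal.ofReal (2 * π) * ∫⁻ x, ‖u x‖ₑ ^ 2 * ‖coh (q, 0) x‖ₑ ^ 2 := by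
  set f : ℝ → ℂ := fun x ↦ u x * (starRingEnd ℂ) (coh (q, 0) x) with hf
  have hconj : MemLp (fun x ↦ (starRingEnd ℂ) (coh (q, 0) x)) 2 := (memLp_coh (q, 0)).star
  have hint : Integrable f := (Lp.memLp u).integrable_mul hconj
  have hmem : MemLp f 2 := by
    refine (Lp.memLp u).mono hint.1 (.of_forall fun x ↦ ?_)
    rw [hf, norm_mul, RCLike.norm_conj]
    exact mul_le_of_le_one_right (norm_nonneg _) (norm_coh_le _ _)
  have hcont : Continuous (𝓕 f) :=
    VectorFourier.fourierIntegral_continuous Real.continuous_fourierChar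
      (L := innerₗ ℝ) continuous_inner hint
  simp_rw [enorm_pair_coh]
  rw [← lintegral_map (f := fun ξ ↦ ‖𝓕 f ξ‖ₑ ^ 2) (g := ((2 * π)⁻¹ * ·)) (by fun_prop)
      (by fun_prop), Real.map_volume_mul_left (by positivity), lintegral_smul_measure,
    ← eLpNorm_two_sq, eLpNorm_fourier_eq hint hmem, eLpNorm_two_sq, inv_inv,
    abs_of_pos (by positivity), smul_eq_mul]
  simp [hf, mul_pow, ← ofReal_norm]

/-- The resolution of the identity by coherent states. -/
theorem lintegral_enorm_pair_coh_sq (u : Lp ℂ 2 (volume : Measure ℝ)) :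
    ∫⁻ z : ℝ × ℝ, ‖pair u (coh z)‖ₑ ^ 2 = ENNReal.ofReal (2 * π) * ‖u‖ₑ ^ 2 := by
  have hmeas : Measurable fun y : ℝ × ℝ ↦ ‖u y.2‖ₑ ^ 2 * ‖coh (y.1, 0) y.2‖ₑ ^ 2 := by
    have h₁ : Measurable fun y : ℝ × ℝ ↦ u y.2 :=
      (Lp.stronglyMeasurable u).measurable.comp measurable_snd
    have h₂ : Measurable fun y : ℝ × ℝ ↦ coh (y.1, 0) y.2 :=
      (continuous_uncurry_coh.comp (f := fun y : ℝ × ℝ ↦ ((y.1, (0 : ℝ)), y.2))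
        (by fun_prop)).measurable
    fun_prop
  rw [Measure.volume_eq_prod, lintegral_prod _
    ((stronglyMeasurable_pair_coh u).measurable.enorm.pow_const 2).aemeasurable]
  simp_rw [lintegral_enorm_pair_coh_sq_right]
  rw [lintegral_const_mul _ hmeas.lintegral_prod_right',
    lintegral_lintegral_swap hmeas.aemeasurable]
  have h (x : ℝ) : ∫⁻ q : ℝ, ‖u x‖ₑ ^ 2 * ‖coh (q, 0) x‖ₑ ^ 2 = ‖u x‖ₑ ^ 2 := by
    rw [lintegral_const_mul' _ _ (by simp), lintegral_enorm_coh_sq, mul_one]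
  simp_rw [h]
  rw [Lp.enorm_def, eLpNorm_two_sq]

theorem memLp_pair_coh (u : Lp ℂ 2 (volume : Measure ℝ)) : MemLp (fun z ↦ pair u (coh z)) 2 := by
  refine ⟨(stronglyMeasurable_pair_coh u).aestronglyMeasurable, ?_⟩
  refine (ENNReal.pow_lt_top_iff.1 ?_).resolve_right two_ne_zero
  rw [eLpNorm_two_sq, lintegral_enorm_pair_coh_sq]
  exact ENNReal.mul_lt_top ENNReal.ofReal_lt_top (ENNReal.pow_lt_top enorm_lt_top)

/-- The coherent state transform `u ↦ (z ↦ ⟨u, Φ_z⟩)` from `L²(ℝ)` to `L²(ℝ²)`. -/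
def cohTransform :
    Lp ℂ 2 (volume : Measure ℝ) →L[ℂ] Lp ℂ 2 (volume : Measure (ℝ × ℝ)) :=
  LinearMap.mkContinuous
    { toFun := fun u ↦ (memLp_pair_coh u).toLp _
      map_add' := fun u v ↦ by
        rw [← MemLp.toLp_add]
        congr 1
        funext z
        simp only [pair_eq_inner_toLp _ (memLp_coh z), inner_add_right, Pi.add_apply]
      map_smul' := fun c u ↦ by
        rw [RingHom.id_apply, ← MemLp.toLp_const_smul]
        congr 1
        funext z
        simp [pair_eq_inner_toLp _ (memLp_coh z), inner_smul_right] }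
    √(2 * π) fun u ↦ by
      refine (sq_le_sq₀ (norm_nonneg _) (by positivity)).1 ?_
      rw [mul_pow, Real.sq_sqrt (by positivity)]
      refine (ENNReal.ofReal_le_ofReal_iff (by positivity)).1 (le_of_eq ?_)
      rw [ENNReal.ofReal_mul (by positivity), ENNReal.ofReal_pow (norm_nonneg _),
        ENNReal.ofReal_pow (norm_nonneg _), ofReal_norm, ofReal_norm,
        ← lintegral_enorm_pair_coh_sq, ← eLpNorm_two_sq]
      simp [Lp.enorm_toLp]

theorem coeFn_cohTransform (u : Lp ℂ 2 (volume : Measure ℝ)) :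
    cohTransform u =ᵐ[volume] fun z ↦ pair u (coh z) :=
  (memLp_pair_coh u).coeFn_toLp

/-- The anti-Wick operator: the compression of multiplication by the symbol along the coherent
state transform. -/
def antiWickOp (a : Lp ℂ ∞ (volume : Measure (ℝ × ℝ))) :
    Lp ℂ 2 (volume : Measure ℝ) →L[ℂ] Lp ℂ 2 (volume : Measure ℝ) :=
  cohTransform.adjoint ∘L
    (ContinuousLinearMap.lsmul ℂ ℂ).holderL volume ∞ 2 2 a ∘L cohTransform

theorem inner_cohTransform_ae_eq (a : ℝ × ℝ → ℂ) (ha : MemLp a ∞) (u w : Lp ℂ 2 (volume : Measure ℝ)) :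
    (fun z ↦ ⟪cohTransform w z,
      (ContinuousLinearMap.lsmul ℂ ℂ).holderL volume ∞ 2 2 (ha.toLp a) (cohTransform u) z⟫_ℂ)
      =ᵐ[volume] fun z ↦ a z * pair u (coh z) * pair (coh z) w := by
  filter_upwards [coeFn_cohTransform u, coeFn_cohTransform w, ha.coeFn_toLp,
    (ContinuousLinearMap.lsmul ℂ ℂ).coeFn_holder (r := 2) (ha.toLp a) (cohTransform u)]
    with z hu hw haz hm
  have hm' : (ContinuousLinearMap.lsmul ℂ ℂ).holderL volume ∞ 2 2 (ha.toLp a) (cohTransform u) z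
      = a z * pair u (coh z) := by
    rw [← haz, ← hu]; exact hm
  rw [hm', hw, RCLike.inner_apply, conj_pair]

theorem integrable_antiWick (a : ℝ × ℝ → ℂ) (ha : MemLp a ∞)
    (u w : Lp ℂ 2 (volume : Measure ℝ)) :
    Integrable fun z ↦ a z * pair u (coh z) * pair (coh z) w :=
  (L2.integrable_inner _ _).congr (inner_cohTransform_ae_eq a ha u w)

theorem pair_antiWickOp (a : ℝ × ℝ → ℂ) (ha : MemLp a ∞) (u w : Lp ℂ 2 (volume : Measure ℝ)) :
    pair (antiWickOp (ha.toLp a) u) w = ∫ z, a z * pair u (coh z) * pair (coh z) w := by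
  rw [pair_eq_inner, antiWickOp, ContinuousLinearMap.comp_apply,
    ContinuousLinearMap.adjoint_inner_right, ContinuousLinearMap.comp_apply, L2.inner_def]
  exact integral_congr_ae (inner_cohTransform_ae_eq a ha u w)

theorem pair_coh_mul_pair_coh (u : ℝ → ℂ) (z : ℝ × ℝ) :
    pair u (coh z) * pair (coh z) u = ((‖pair u (coh z)‖ ^ 2 : ℝ) : ℂ) := by
  rw [← conj_pair u, Complex.mul_conj, Complex.normSq_eq_norm_sq]

/-- Anti-Wick quantization of a bounded measurable symbol is well
defined as a bounded operator on `L²(ℝ,ℂ)` and is positivity preserving. -/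
theorem antiWick_quantization (a : ℝ × ℝ → ℝ) (hmeas : Measurable a)
    (hbd : ∃ C : ℝ, ∀ z : ℝ × ℝ, |a z| ≤ C) :
    -- integrability of the anti-Wick pairing
    (∀ u w : Lp ℂ 2 (volume : Measure ℝ),
      Integrable (fun z : ℝ × ℝ =>
        (a z : ℂ) * pair (⇑u) (coh z) * pair (coh z) (⇑w))) ∧
    -- existence and uniqueness of the bounded operator Op^aw(a)
    (∃! T : Lp ℂ 2 (volume : Measure ℝ) →L[ℂ] Lp ℂ 2 (volume : Measure ℝ),
      ∀ u w : Lp ℂ 2 (volume : Measure ℝ),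
        pair (⇑(T u)) (⇑w) =
          ∫ z : ℝ × ℝ, (a z : ℂ) * pair (⇑u) (coh z) * pair (coh z) (⇑w)) ∧
    -- positivity
    (∀ T : Lp ℂ 2 (volume : Measure ℝ) →L[ℂ] Lp ℂ 2 (volume : Measure ℝ),
      (∀ u w : Lp ℂ 2 (volume : Measure ℝ),
        pair (⇑(T u)) (⇑w) =
          ∫ z : ℝ × ℝ, (a z : ℂ) * pair (⇑u) (coh z) * pair (coh z) (⇑w)) →
      (∀ z : ℝ × ℝ, 0 ≤ a z) →
      ∀ u : Lp ℂ 2 (volume : Measure ℝ),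
        0 ≤ (pair (⇑(T u)) (⇑u)).re ∧ (pair (⇑(T u)) (⇑u)).im = 0) := by
  obtain ⟨C, hC⟩ := hbd
  have ha : MemLp (fun z ↦ (a z : ℂ)) ∞ :=
    memLp_top_of_bound (Complex.measurable_ofReal.comp hmeas).aestronglyMeasurable C
      (.of_forall fun z ↦ by simpa using hC z)
  refine ⟨integrable_antiWick _ ha, ⟨antiWickOp (ha.toLp _), pair_antiWickOp _ ha, ?_⟩, ?_⟩
  · intro T hT
    ext1 u
    refine ext_inner_left ℂ fun w ↦ ?_
    rw [← pair_eq_inner, ← pair_eq_inner, hT, pair_antiWickOp]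
  · intro T hT hpos u
    have h : pair (T u) u = ((∫ z, a z * ‖pair u (coh z)‖ ^ 2 : ℝ) : ℂ) := by
      rw [hT, ← integral_complex_ofReal]
      simp_rw [mul_assoc, pair_coh_mul_pair_coh]
      simp
    rw [h]
    exact ⟨integral_nonneg fun z ↦ mul_nonneg (hpos z) (sq_nonneg _), Complex.ofReal_im _⟩

end
end
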